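/- arXiv:1911.10944 — 2 statements merged into one kernel-verified Lean document; each statement's English description precedes it below -/
import Mathlib

section
/- For every real y with -1 ≤ y < 1, the partial sums of the Legendre polynomials at y are uniformly bounded: there exists M ≥ 0 such that |∑_{l=0}^N P_l(y)| ≤ M for all N ∈ ℕ. -/
open Filter Topology

/-- The Legendre polynomials `P l` on `ℝ`, i.e. the orthogonal polynomials on `[-1,1]`
normalized by `P l 1 = 1`, defined via the Bonnet recurrence
`P 0 y = 1`, `P 1 y = y`, `(n+2) • P (n+2) y = (2n+3) y P (n+1) y - (n+1) P n y`. -/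
noncomputable def legendreP : ℕ → ℝ → ℝ
  | 0, _ => 1
  | 1, y => y
  | (n + 2), y =>
      ((2 * (n : ℝ) + 3) * y * legendreP (n + 1) y - ((n : ℝ) + 1) * legendreP n y) / ((n : ℝ) + 2)

/-!
Bonnet's recurrence at index `n + 1` rearranges to
`(1 - y) P_{n+1} = (P_{n+1} - P_n) - w_n (P_{n+2} - P_n)` with `w_n = (n + 2) / (2n + 3)`. Summed
over `n`, the first difference telescopes, and since `w` is positive and decreasing, Abel's
inequality bounds the second sum by the telescoping sums of `P_{n+2} - P_n`. Both are therefore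
controlled by `|P_n| ≤ 1`. On `(-1, 1)` that bound comes from the decreasing quantity
`(P_{n+1} - y P_n)² + (1 - y²) P_n²`; at `y = ±1` the values are explicit.
-/

theorem norm_sum_range_smul_le_of_antitone {E : Type*} [SeminormedAddCommGroup E] [NormedSpace ℝ E]
    {c : ℕ → ℝ} {z : ℕ → E} {B : ℝ} (hc : Antitone c) (hc₀ : ∀ n, 0 ≤ c n)
    (hB : ∀ n, ‖∑ i ∈ Finset.range n, z i‖ ≤ B) (n : ℕ) :
    ‖∑ i ∈ Finset.range n, c i • z i‖ ≤ c 0 * B := by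
  have smul_sum_le (m k : ℕ) : ‖c m • ∑ i ∈ Finset.range k, z i‖ ≤ c m * B := by
    rw [norm_smul, Real.norm_of_nonneg (hc₀ m)]
    exact mul_le_mul_of_nonneg_left (hB k) (hc₀ m)
  have increment_le (i : ℕ) :
      ‖(c (i + 1) - c i) • ∑ j ∈ Finset.range (i + 1), z j‖ ≤ (c i - c (i + 1)) * B := by
    have hci : 0 ≤ c i - c (i + 1) := sub_nonneg.2 (hc i.le_succ)
    rw [norm_smul, norm_sub_rev, Real.norm_of_nonneg hci]
    exact mul_le_mul_of_nonneg_left (hB _) hci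
  calc ‖∑ i ∈ Finset.range n, c i • z i‖
      ≤ c (n - 1) * B + ∑ i ∈ Finset.range (n - 1), (c i - c (i + 1)) * B := by
        rw [Finset.sum_range_by_parts]
        exact (norm_sub_le _ _).trans
          (add_le_add (smul_sum_le _ _) (norm_sum_le_of_le _ fun i _ ↦ increment_le i))
    _ = c 0 * B := by rw [← Finset.sum_mul, Finset.sum_range_sub']; ring

theorem legendreP_zero (y : ℝ) : legendreP 0 y = 1 := by rw [legendreP]

theorem legendreP_one (y : ℝ) : legendreP 1 y = y := by rw [legendreP]

theorem add_two_mul_legendreP_add_two (n : ℕ) (y : ℝ) :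
    ((n : ℝ) + 2) * legendreP (n + 2) y =
      (2 * n + 3) * y * legendreP (n + 1) y - (n + 1) * legendreP n y := by
  rw [legendreP, mul_div_cancel₀ _ (by positivity)]

theorem legendreP_neg (n : ℕ) (y : ℝ) : legendreP n (-y) = (-1) ^ n * legendreP n y := by
  induction n using Nat.twoStepInduction with
  | zero => simp [legendreP_zero]
  | one => simp [legendreP_one]
  | more n ih₀ ih₁ =>
    rw [legendreP, legendreP, ih₀, ih₁]
    ring

theorem legendreP_apply_one (n : ℕ) : legendreP n 1 = 1 := by
  induction n using Nat.twoStepInduction with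
  | zero => exact legendreP_zero 1
  | one => exact legendreP_one 1
  | more n ih₀ ih₁ =>
    rw [legendreP, ih₀, ih₁, div_eq_one_iff_eq (by positivity)]
    ring

/-- The quadratic form `P_{n+1}² - 2 y P_{n+1} P_n + P_n²` in consecutive Legendre polynomials,
written as a sum of squares. It is conserved by the constant-coefficient recurrence
`u_{n+2} = 2 y u_{n+1} - u_n`, to which Bonnet's recurrence tends, and bounds `P_n` on `(-1, 1)`. -/
noncomputable def legendreEnergy (y : ℝ) (n : ℕ) : ℝ :=
  (legendreP (n + 1) y - y * legendreP n y) ^ 2 + (1 - y ^ 2) * legendreP n y ^ 2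

theorem legendreEnergy_zero (y : ℝ) : legendreEnergy y 0 = 1 - y ^ 2 := by
  simp [legendreEnergy, legendreP_zero, legendreP_one]

theorem legendreP_add_two_sub (n : ℕ) (y : ℝ) :
    legendreP (n + 2) y - y * legendreP (n + 1) y =
      (n + 1) / (n + 2) * (y * legendreP (n + 1) y - legendreP n y) := by
  field_simp
  linear_combination add_two_mul_legendreP_add_two n y

theorem legendreEnergy_antitone (y : ℝ) : Antitone (legendreEnergy y) := by
  refine antitone_nat_of_succ_le fun n ↦ ?_
  have ratio_le_one : ((n : ℝ) + 1) / (n + 2) ≤ 1 :=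
    div_le_one_of_le₀ (by linarith) (by positivity)
  calc legendreEnergy y (n + 1)
      = (((n : ℝ) + 1) / (n + 2)) ^ 2 * (y * legendreP (n + 1) y - legendreP n y) ^ 2
          + (1 - y ^ 2) * legendreP (n + 1) y ^ 2 := by
        rw [legendreEnergy, legendreP_add_two_sub, mul_pow]
    _ ≤ 1 * (y * legendreP (n + 1) y - legendreP n y) ^ 2
          + (1 - y ^ 2) * legendreP (n + 1) y ^ 2 := by
        gcongr
        exact pow_le_one₀ (by positivity) ratio_le_one
    _ = legendreEnergy y n := by rw [legendreEnergy]; ring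

theorem abs_legendreP_le_one {y : ℝ} (hy : |y| ≤ 1) (n : ℕ) : |legendreP n y| ≤ 1 := by
  rcases hy.lt_or_eq with hy | hy
  · have hpos : 0 < 1 - y ^ 2 := sub_pos.2 ((sq_lt_one_iff_abs_lt_one y).2 hy)
    have energy_bound : (1 - y ^ 2) * legendreP n y ^ 2 ≤ (1 - y ^ 2) * 1 :=
      calc (1 - y ^ 2) * legendreP n y ^ 2
          ≤ legendreEnergy y n := le_add_of_nonneg_left (sq_nonneg _)
        _ ≤ legendreEnergy y 0 := legendreEnergy_antitone y n.zero_le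
        _ = (1 - y ^ 2) * 1 := by rw [legendreEnergy_zero, mul_one]
    exact (sq_le_one_iff_abs_le_one _).1 (le_of_mul_le_mul_left energy_bound hpos)
  · rcases eq_or_eq_neg_of_abs_eq hy with rfl | rfl <;> simp [legendreP_neg, legendreP_apply_one]

/-- The weight `(n + 2) / (2n + 3)` of `P_{n+2}` when Bonnet's recurrence is solved for
`y P_{n+1}`; the weight of `P_n` is then `1 - bonnetWeight n`. -/
noncomputable def bonnetWeight (n : ℕ) : ℝ := (n + 2) / (2 * n + 3)

theorem bonnetWeight_zero : bonnetWeight 0 = 2 / 3 := by simp [bonnetWeight]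

theorem bonnetWeight_nonneg (n : ℕ) : 0 ≤ bonnetWeight n := by
  unfold bonnetWeight
  positivity

theorem bonnetWeight_antitone : Antitone bonnetWeight := by
  refine antitone_nat_of_succ_le fun n ↦ ?_
  unfold bonnetWeight
  rw [div_le_div_iff₀ (by positivity) (by positivity)]
  push_cast
  linarith

theorem mul_legendreP_add_one (n : ℕ) (y : ℝ) :
    y * legendreP (n + 1) y =
      bonnetWeight n * legendreP (n + 2) y + (1 - bonnetWeight n) * legendreP n y := by
  unfold bonnetWeight
  field_simp
  linear_combination -add_two_mul_legendreP_add_two n y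

theorem one_sub_mul_sum_legendreP (y : ℝ) (N : ℕ) :
    (1 - y) * ∑ l ∈ Finset.range (N + 1), legendreP l y =
      legendreP N y - y -
        ∑ n ∈ Finset.range N, bonnetWeight n * (legendreP (n + 2) y - legendreP n y) := by
  induction N with
  | zero => simp [legendreP_zero]
  | succ N ih =>
    rw [Finset.sum_range_succ, mul_add, ih, Finset.sum_range_succ]
    linear_combination -mul_legendreP_add_one N y

theorem abs_sum_legendreP_add_two_sub_le {y : ℝ} (hy : |y| ≤ 1) (N : ℕ) :
    |∑ n ∈ Finset.range N, (legendreP (n + 2) y - legendreP n y)| ≤ 4 := by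
  have pair_le (n : ℕ) : |legendreP n y + legendreP (n + 1) y| ≤ 2 :=
    (abs_add_le _ _).trans
      (by linarith [abs_legendreP_le_one hy n, abs_legendreP_le_one hy (n + 1)])
  calc |∑ n ∈ Finset.range N, (legendreP (n + 2) y - legendreP n y)|
      = |(legendreP N y + legendreP (N + 1) y) - (legendreP 0 y + legendreP 1 y)| := by
        rw [← Finset.sum_range_sub fun n ↦ legendreP n y + legendreP (n + 1) y]
        simp only [add_assoc, Nat.reduceAdd, add_sub_add_comm, sub_add_sub_cancel']
    _ ≤ 4 := (abs_sub _ _).trans (by linarith [pair_le N, pair_le 0])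

theorem one_sub_mul_abs_sum_legendreP_le {y : ℝ} (hy : |y| ≤ 1) (N : ℕ) :
    (1 - y) * |∑ l ∈ Finset.range (N + 1), legendreP l y| ≤ 14 / 3 := by
  have weighted_sum_le :
      |∑ n ∈ Finset.range N, bonnetWeight n * (legendreP (n + 2) y - legendreP n y)| ≤ 2 / 3 * 4 :=
    bonnetWeight_zero ▸ norm_sum_range_smul_le_of_antitone (E := ℝ) bonnetWeight_antitone
      bonnetWeight_nonneg (abs_sum_legendreP_add_two_sub_le hy) N
  have hy₀ : 0 ≤ 1 - y := sub_nonneg.2 (le_of_abs_le hy)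
  calc (1 - y) * |∑ l ∈ Finset.range (N + 1), legendreP l y|
      = |legendreP N y - y -
          ∑ n ∈ Finset.range N, bonnetWeight n * (legendreP (n + 2) y - legendreP n y)| := by
        rw [← one_sub_mul_sum_legendreP, abs_mul, abs_of_nonneg hy₀]
    _ ≤ 1 + 1 + 2 / 3 * 4 :=
        (abs_sub _ _).trans <| add_le_add
          ((abs_sub _ _).trans (add_le_add (abs_legendreP_le_one hy N) hy)) weighted_sum_le
    _ = 14 / 3 := by norm_num

/-- For every `-1 ≤ y < 1`, the partial sums `∑_{l=0}^N P l y` are uniformly bounded. -/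
theorem legendre_partial_sums_bounded (y : ℝ) (hy₁ : -1 ≤ y) (hy₂ : y < 1) :
    ∃ M : ℝ, 0 ≤ M ∧ ∀ N : ℕ, |∑ l ∈ Finset.range (N + 1), legendreP l y| ≤ M := by
  have hpos : 0 < 1 - y := sub_pos.2 hy₂
  refine ⟨14 / 3 / (1 - y), by positivity, fun N ↦ ?_⟩
  rw [le_div_iff₀' hpos]
  exact one_sub_mul_abs_sum_legendreP_le (abs_le.2 ⟨hy₁, hy₂.le⟩) N
end

section
/- For every real β, ∫_0^∞ e^{-z/2}·cos(βz)/√(1 + e^{-2z}) dz = Γ(1/4 + iβ/2)·Γ(1/4 - iβ/2)/(4√π), where Γ is the complex Gamma function (the product on the right is a real number, equal to |Γ(1/4 + iβ/2)|²). Consequently, the Green's function of the screened Poisson equation on the sphere at angular separation γ = π/2 (i.e. cos(γ) = 0) equals G = -(1/(8π^{3/2}))·Γ(1/4 + iβ/2)·Γ(1/4 - iβ/2). -/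
/-!
Since `e^{-z/2} / √(1 + e^{-2z}) = (2 cosh z)^{-1/2}`, the integral is the case `a = 1/2` of
`∫_0^∞ cos(wz) / (2 cosh z)^a dz = Γ((a + iw)/2) Γ((a - iw)/2) / (4 Γ(a))`, valid for
`|Im w| < Re a`. The logistic substitution `x = 1 / (1 + e^{-2z})` turns the Beta integral
`B(u, v)` into `2 ∫_ℝ e^{(u-v)z} / (2 cosh z)^{u+v} dz`. With `u, v = (a ± iw)/2`, averaging this
over `±w` gives the cosine integral over `ℝ`, which is twice the one over the half-line.
-/

open MeasureTheory Set Complex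

section ChangeOfVariables

variable {E : Type*} [NormedAddCommGroup E] [NormedSpace ℝ E]

theorem integrableOn_Ioo_zero_one_iff_integrable_sigmoid (f : ℝ → E) :
    IntegrableOn f (Ioo 0 1) ↔
      Integrable fun t => (Real.sigmoid t * (1 - Real.sigmoid t)) • f (Real.sigmoid t) := by
  rw [← Real.range_sigmoid, ← image_univ,
    integrableOn_image_iff_integrableOn_deriv_smul_of_monotoneOn .univ
      (fun t _ => (Real.hasDerivAt_sigmoid t).hasDerivWithinAt)
      (Real.sigmoid_monotone.monotoneOn _), integrableOn_univ]

theorem setIntegral_Ioo_zero_one_eq_integral_sigmoid (f : ℝ → E) :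
    ∫ x in Ioo 0 1, f x =
      ∫ t, (Real.sigmoid t * (1 - Real.sigmoid t)) • f (Real.sigmoid t) := by
  rw [← Real.range_sigmoid, ← image_univ,
    integral_image_eq_integral_deriv_smul_of_monotoneOn .univ
      (fun t _ => (Real.hasDerivAt_sigmoid t).hasDerivWithinAt)
      (Real.sigmoid_monotone.monotoneOn _), setIntegral_univ]

theorem integral_eq_two_smul_integral_Ioi_of_even {f : ℝ → E} (hf : Integrable f)
    (hf_even : Function.Even f) : ∫ x, f x = (2 : ℝ) • ∫ x in Ioi 0, f x := by
  have reflect : ∫ x in Iic 0, f x = ∫ x in Ioi 0, f x := by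
    simpa only [hf_even _, neg_zero] using (integral_comp_neg_Ioi 0 f).symm
  rw [← intervalIntegral.integral_Iic_add_Ioi (b := 0) hf.integrableOn hf.integrableOn, reflect,
    two_smul]

end ChangeOfVariables

theorem sigmoid_mul_one_sub_sigmoid_smul_cpow (u v : ℂ) (t : ℝ) :
    (Real.sigmoid t * (1 - Real.sigmoid t)) •
        ((Real.sigmoid t : ℂ) ^ (u - 1) * (1 - (Real.sigmoid t : ℂ)) ^ (v - 1)) =
      (Real.sigmoid t : ℂ) ^ u * (Real.sigmoid (-t) : ℂ) ^ v := by
  have sigmoid_ne_zero (s : ℝ) : (Real.sigmoid s : ℂ) ≠ 0 :=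
    ofReal_ne_zero.mpr (Real.sigmoid_pos s).ne'
  have one_sub_sigmoid : (1 : ℂ) - Real.sigmoid t = Real.sigmoid (-t) := by
    rw [Real.sigmoid_neg, ofReal_sub, ofReal_one]
  rw [← Real.sigmoid_neg, one_sub_sigmoid, cpow_sub _ _ (sigmoid_ne_zero t),
    cpow_sub _ _ (sigmoid_ne_zero (-t)), cpow_one, cpow_one, real_smul, ofReal_mul]
  field_simp [sigmoid_ne_zero]

theorem integrable_sigmoid_cpow_mul_sigmoid_neg_cpow {u v : ℂ} (hu : 0 < u.re) (hv : 0 < v.re) :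
    Integrable fun t : ℝ => (Real.sigmoid t : ℂ) ^ u * (Real.sigmoid (-t) : ℂ) ^ v := by
  have on_Ioo := (intervalIntegrable_iff_integrableOn_Ioo_of_le zero_le_one).mp
    (betaIntegral_convergent hu hv)
  simpa only [integrableOn_Ioo_zero_one_iff_integrable_sigmoid,
    sigmoid_mul_one_sub_sigmoid_smul_cpow] using on_Ioo

theorem betaIntegral_eq_integral_sigmoid (u v : ℂ) :
    betaIntegral u v = ∫ t : ℝ, (Real.sigmoid t : ℂ) ^ u * (Real.sigmoid (-t) : ℂ) ^ v := by
  simp only [betaIntegral, intervalIntegral.integral_of_le zero_le_one,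
    integral_Ioc_eq_integral_Ioo, setIntegral_Ioo_zero_one_eq_integral_sigmoid,
    sigmoid_mul_one_sub_sigmoid_smul_cpow]

theorem sigmoid_two_mul (z : ℝ) : Real.sigmoid (2 * z) = Real.exp z / (2 * Real.cosh z) := by
  have factor : 2 * Real.cosh z = Real.exp z * (1 + Real.exp (-(2 * z))) := by
    rw [Real.cosh_eq, mul_add, ← Real.exp_add]
    ring_nf
  rw [factor, Real.sigmoid_def, div_mul_cancel_left₀ (Real.exp_ne_zero z)]

theorem sigmoid_two_mul_cpow (u : ℂ) (z : ℝ) :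
    (Real.sigmoid (2 * z) : ℂ) ^ u = exp (z * u) / (2 * cosh z) ^ u := by
  rw [sigmoid_two_mul, ofReal_div,
    div_cpow_ofReal_nonneg (Real.exp_pos z).le (by positivity), ofReal_exp,
    cpow_def_of_ne_zero (exp_ne_zero _), ← ofReal_exp, ← ofReal_log (Real.exp_pos z).le,
    Real.log_exp, ofReal_mul, ofReal_cosh, ofReal_ofNat]

theorem two_mul_cosh_ofReal_ne_zero (z : ℝ) : 2 * cosh (z : ℂ) ≠ 0 := by
  exact_mod_cast (mul_pos two_pos (Real.cosh_pos z)).ne'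

theorem sigmoid_two_mul_cpow_mul_sigmoid_neg_cpow (u v : ℂ) (z : ℝ) :
    (Real.sigmoid (2 * z) : ℂ) ^ u * (Real.sigmoid (-(2 * z)) : ℂ) ^ v =
      exp ((u - v) * z) / (2 * cosh z) ^ (u + v) := by
  rw [← mul_neg, sigmoid_two_mul_cpow, sigmoid_two_mul_cpow, ofReal_neg, cosh_neg,
    div_mul_div_comm, ← exp_add, ← cpow_add _ _ (two_mul_cosh_ofReal_ne_zero z)]
  ring_nf

theorem integrable_exp_mul_div_two_mul_cosh_cpow {u v : ℂ} (hu : 0 < u.re) (hv : 0 < v.re) :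
    Integrable fun z : ℝ => exp ((u - v) * z) / (2 * cosh z) ^ (u + v) := by
  simpa only [sigmoid_two_mul_cpow_mul_sigmoid_neg_cpow] using
    (integrable_sigmoid_cpow_mul_sigmoid_neg_cpow hu hv).comp_mul_left' two_ne_zero

theorem integral_exp_mul_div_two_mul_cosh_cpow {u v : ℂ} (hu : 0 < u.re) (hv : 0 < v.re) :
    ∫ z : ℝ, exp ((u - v) * z) / (2 * cosh z) ^ (u + v) =
      Gamma u * Gamma v / (2 * Gamma (u + v)) := by
  simp only [← sigmoid_two_mul_cpow_mul_sigmoid_neg_cpow]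
  rw [Measure.integral_comp_mul_left
      (fun t : ℝ => (Real.sigmoid t : ℂ) ^ u * (Real.sigmoid (-t) : ℂ) ^ v) 2,
    ← betaIntegral_eq_integral_sigmoid, betaIntegral_eq_Gamma_mul_div u v hu hv, real_smul,
    abs_of_pos (by norm_num), ofReal_inv, ofReal_ofNat]
  ring

section CosineTransform

variable {a w : ℂ}

theorem add_I_mul_div_two_re_pos (h : |w.im| < a.re) : 0 < ((a + I * w) / 2).re := by
  rw [div_ofNat_re, add_re, I_mul_re]
  linarith [(abs_lt.mp h).2]

theorem sub_I_mul_div_two_re_pos (h : |w.im| < a.re) : 0 < ((a - I * w) / 2).re := by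
  rw [div_ofNat_re, sub_re, I_mul_re]
  linarith [(abs_lt.mp h).1]

theorem integrable_exp_I_mul_div_two_mul_cosh_cpow (h : |w.im| < a.re) :
    Integrable fun z : ℝ => exp (I * w * z) / (2 * cosh z) ^ a := by
  have integrable := integrable_exp_mul_div_two_mul_cosh_cpow
    (add_I_mul_div_two_re_pos h) (sub_I_mul_div_two_re_pos h)
  have sub_eq : (a + I * w) / 2 - (a - I * w) / 2 = I * w := by ring
  have add_eq : (a + I * w) / 2 + (a - I * w) / 2 = a := by ring
  rwa [sub_eq, add_eq] at integrable

theorem integral_exp_I_mul_div_two_mul_cosh_cpow (h : |w.im| < a.re) :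
    ∫ z : ℝ, exp (I * w * z) / (2 * cosh z) ^ a =
      Gamma ((a + I * w) / 2) * Gamma ((a - I * w) / 2) / (2 * Gamma a) := by
  have integral_eq := integral_exp_mul_div_two_mul_cosh_cpow
    (add_I_mul_div_two_re_pos h) (sub_I_mul_div_two_re_pos h)
  have sub_eq : (a + I * w) / 2 - (a - I * w) / 2 = I * w := by ring
  have add_eq : (a + I * w) / 2 + (a - I * w) / 2 = a := by ring
  rwa [sub_eq, add_eq] at integral_eq

theorem cos_div_eq_average_exp (w z c : ℂ) :
    cos (w * z) / c = (exp (I * w * z) / c + exp (I * -w * z) / c) / 2 := by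
  rw [cos]
  ring_nf

theorem integrable_cos_div_two_mul_cosh_cpow (h : |w.im| < a.re) :
    Integrable fun z : ℝ => cos (w * z) / (2 * cosh z) ^ a := by
  have h_neg : |(-w).im| < a.re := by rwa [neg_im, abs_neg]
  simpa only [cos_div_eq_average_exp, Pi.add_apply] using
    ((integrable_exp_I_mul_div_two_mul_cosh_cpow h).add
      (integrable_exp_I_mul_div_two_mul_cosh_cpow h_neg)).div_const 2

theorem integral_cos_div_two_mul_cosh_cpow (h : |w.im| < a.re) :
    ∫ z : ℝ, cos (w * z) / (2 * cosh z) ^ a =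
      Gamma ((a + I * w) / 2) * Gamma ((a - I * w) / 2) / (2 * Gamma a) := by
  have h_neg : |(-w).im| < a.re := by rwa [neg_im, abs_neg]
  simp only [cos_div_eq_average_exp]
  rw [integral_div, integral_add (integrable_exp_I_mul_div_two_mul_cosh_cpow h)
      (integrable_exp_I_mul_div_two_mul_cosh_cpow h_neg),
    integral_exp_I_mul_div_two_mul_cosh_cpow h, integral_exp_I_mul_div_two_mul_cosh_cpow h_neg,
    mul_neg, ← sub_eq_add_neg, sub_neg_eq_add]
  ring

theorem integral_Ioi_cos_div_two_mul_cosh_cpow (h : |w.im| < a.re) :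
    ∫ z in Ioi (0 : ℝ), cos (w * z) / (2 * cosh z) ^ a =
      Gamma ((a + I * w) / 2) * Gamma ((a - I * w) / 2) / (4 * Gamma a) := by
  have even : Function.Even fun z : ℝ => cos (w * z) / (2 * cosh z) ^ a := fun z => by
    simp only [ofReal_neg, mul_neg, cos_neg, cosh_neg]
  have double := integral_eq_two_smul_integral_Ioi_of_even
    (integrable_cos_div_two_mul_cosh_cpow h) even
  rw [integral_cos_div_two_mul_cosh_cpow h, real_smul, ofReal_ofNat] at double
  linear_combination (-1 / 2) * double

end CosineTransform

theorem exp_neg_half_div_sqrt_one_add_exp (z : ℝ) :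
    Real.exp (-z / 2) / √(1 + Real.exp (-2 * z)) = 1 / √(2 * Real.cosh z) := by
  have factor : 1 + Real.exp (-2 * z) = Real.exp (-z) * (2 * Real.cosh z) := by
    rw [Real.cosh_eq, mul_div_cancel₀ _ two_ne_zero, mul_add, ← Real.exp_add, ← Real.exp_add,
      neg_add_cancel, Real.exp_zero, ← neg_add, ← two_mul, neg_mul]
  rw [factor, Real.sqrt_mul (Real.exp_pos _).le, ← Real.exp_half,
    div_mul_cancel_left₀ (Real.exp_ne_zero _), one_div]

theorem ofReal_sqrt_eq_cpow {x : ℝ} (hx : 0 ≤ x) : (√x : ℂ) = (x : ℂ) ^ (1 / 2 : ℂ) := by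
  rw [Real.sqrt_eq_rpow, ofReal_cpow hx, ofReal_div, ofReal_one, ofReal_ofNat]

theorem exp_neg_half_mul_div_sqrt_one_add_exp (z : ℝ) (c : ℂ) :
    (Real.exp (-z / 2) : ℂ) * c / (√(1 + Real.exp (-2 * z)) : ℝ) =
      c / (2 * cosh z) ^ (1 / 2 : ℂ) := by
  rw [mul_div_right_comm, ← ofReal_div, exp_neg_half_div_sqrt_one_add_exp, ofReal_div,
    ofReal_one, one_div_mul_eq_div, ofReal_sqrt_eq_cpow (by positivity), ofReal_mul,
    ofReal_ofNat, ofReal_cosh]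

theorem integral_Ioi_exp_neg_half_mul_cos_div_sqrt {β : ℂ} (hβ : |β.im| < 1 / 2) :
    ∫ z in Ioi (0 : ℝ), (Real.exp (-z / 2) : ℂ) * cos (β * z) / √(1 + Real.exp (-2 * z)) =
      Gamma (1 / 4 + I * β / 2) * Gamma (1 / 4 - I * β / 2) / (4 * √Real.pi) := by
  have strip : |β.im| < (1 / 2 : ℂ).re := by simpa using hβ
  simp only [exp_neg_half_mul_div_sqrt_one_add_exp]
  rw [integral_Ioi_cos_div_two_mul_cosh_cpow strip, Gamma_one_half_eq,
    ofReal_sqrt_eq_cpow Real.pi_pos.le]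
  ring_nf

theorem rpow_three_halves_eq_mul_sqrt {x : ℝ} (hx : 0 ≤ x) : x ^ (3 / 2 : ℝ) = x * √x := by
  rw [Real.sqrt_eq_rpow, ← Real.rpow_one_add' hx (by norm_num)]
  norm_num

-- The strip contains the imaginary values of `β = √(R²/L_d² - 1/4)` that occur when `R < L_d/2`.
theorem green_at_right_angle_general {β : ℂ} (hβ : |β.im| < 1 / 2) :
    (∫ z in Ioi (0 : ℝ), (Real.exp (-z / 2) : ℂ) * cos (β * z) / √(1 + Real.exp (-2 * z)) =
      Gamma (1 / 4 + I * β / 2) * Gamma (1 / 4 - I * β / 2) / (4 * √Real.pi)) ∧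
    (-(1 / (2 * Real.pi)) : ℝ) * (∫ z in Ioi (0 : ℝ),
        (Real.exp (-z / 2) : ℂ) * cos (β * z) / √(Real.exp (-2 * z) + 1)) =
      -(1 / (8 * Real.pi ^ (3 / 2 : ℝ) : ℝ)) *
        (Gamma (1 / 4 + I * β / 2) * Gamma (1 / 4 - I * β / 2)) := by
  have integral_eq := integral_Ioi_exp_neg_half_mul_cos_div_sqrt hβ
  refine ⟨integral_eq, ?_⟩
  simp only [add_comm (Real.exp _) 1]
  rw [integral_eq, rpow_three_halves_eq_mul_sqrt Real.pi_pos.le]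
  push_cast
  ring

/-- For every real `β`,
`∫_0^∞ e^{-z/2} cos(βz)/√(1 + e^{-2z}) dz = Γ(1/4 + iβ/2) Γ(1/4 - iβ/2)/(4√π)`.
Consequently the Green's function of the screened Poisson equation on the sphere at
`cos γ = 0` equals `-(1/(8 π^{3/2})) Γ(1/4 + iβ/2) Γ(1/4 - iβ/2)`. -/
theorem green_at_right_angle (β : ℝ) :
    ((∫ z in Set.Ioi (0 : ℝ), Real.exp (-z / 2) * Real.cos (β * z) /
        Real.sqrt (1 + Real.exp (-2 * z)) : ℝ) : ℂ) =
      Complex.Gamma (1 / 4 + Complex.I * β / 2) * Complex.Gamma (1 / 4 - Complex.I * β / 2) /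
        (4 * Real.sqrt Real.pi) ∧
    ((-(1 / (2 * Real.pi)) * ∫ z in Set.Ioi (0 : ℝ), Real.exp (-z / 2) * Real.cos (β * z) /
        Real.sqrt (Real.exp (-2 * z) + 1) : ℝ) : ℂ) =
      -(1 / (8 * (Real.pi : ℝ) ^ ((3 : ℝ) / 2) : ℝ)) *
        (Complex.Gamma (1 / 4 + Complex.I * β / 2) *
          Complex.Gamma (1 / 4 - Complex.I * β / 2)) := by
  simpa only [← ofReal_mul, ← ofReal_cos, ← ofReal_div, integral_complex_ofReal] using
    green_at_right_angle_general (β := β) (by simp)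
end
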